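/- Let n ≥ 3 be an integer and let y1, y2, y3, y4 be arbitrary integers (regarded as residues mod n). Set z1 := min(d_n(y1,y2), d_n(y2,y1)) and S := f_n(y1,y3) + f_n(y1,y4) + f_n(y2,y3) + f_n(y2,y4) − 4·⌊n/2⌋·⌊(n−1)/2⌋. Then S ≥ z1² − Δ_n·Δ_{z1}. -/

import Mathlib

/-!
Fix a point `w`, let `a`, `b` be the clockwise distances from `y1`, `y2` to `w`, and put
`F = ⌊n/2⌋⌊(n-1)/2⌋`. Completing the square gives `4 fn = (n - 2d)² + n² - 2n`, and
`4 F = n² - 2n + Δ_n`, so with `t = a - b` and `s = n - a - b`,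
`2 (fn n y1 w + fn n y2 w - 2 F) = t² + s² - Δ_n`.
Here `|t|` is one of the two arc lengths between `y1` and `y2`, so `|t| ≥ z`, the shorter one.
The correction `-Δ_n` matters only if `n` is odd and `z` is even: then either `|t| ≥ z + 1`,
or `|t| = z` is even, so that `s` is odd and `s² ≥ 1`. Hence the left side is at least `z² - Δ_n Δ_z`
(`pair_bound`), and adding this bound for `w = y3` and `w = y4` gives the theorem.
-/

/-- Clockwise distance on a circle with `n` positions: `(v - u) mod n`. -/
def dn (n u v : ℤ) : ℤ := (v - u) % n

/-- `C(m,2) = m(m-1)/2`. -/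
def c2 (m : ℤ) : ℤ := m * (m - 1) / 2

/-- `f_n(u,v) = C(d_n(u,v),2) + C(n - d_n(u,v),2)`. -/
def fn (n u v : ℤ) : ℤ := c2 (dn n u v) + c2 (n - dn n u v)

/-- `Δ_k = 1` if `k` is odd, `0` otherwise. -/
def delta (k : ℤ) : ℤ := if Odd k then 1 else 0

lemma two_mul_c2 (m : ℤ) : 2 * c2 m = m * (m - 1) := by
  unfold c2
  exact Int.mul_ediv_cancel' (Int.even_mul_pred_self m).two_dvd

lemma four_mul_fn (n u v : ℤ) :
    4 * fn n u v = (n - 2 * dn n u v) ^ 2 + n ^ 2 - 2 * n := by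
  have h1 := two_mul_c2 (dn n u v)
  have h2 := two_mul_c2 (n - dn n u v)
  unfold fn
  linear_combination 2 * h1 + 2 * h2

lemma four_mul_halves (n : ℤ) :
    4 * ((n / 2) * ((n - 1) / 2)) = n ^ 2 - 2 * n + delta n := by
  unfold delta
  rcases Int.even_or_odd' n with ⟨k, rfl | rfl⟩
  · have h1 : 2 * k / 2 = k := by omega
    have h2 : (2 * k - 1) / 2 = k - 1 := by omega
    rw [h1, h2, if_neg (by simp)]
    ring
  · have h1 : (2 * k + 1) / 2 = k := by omega
    have h2 : (2 * k + 1 - 1) / 2 = k := by omega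
    rw [h1, h2, if_pos ⟨k, rfl⟩]
    ring

/-- Distances to a third point `w` differ, up to sign, by one of the two arc lengths between
`u` and `v`, hence by at least the shorter one. -/
lemma abs_dn_sub (n : ℤ) (hn : 0 < n) (u v w : ℤ) :
    let z := min (dn n u v) (dn n v u)
    let t := |dn n u w - dn n v w|
    0 ≤ z ∧ z ≤ t := by
  intro z t
  have ha0 : 0 ≤ dn n u w := Int.emod_nonneg _ hn.ne'
  have han : dn n u w < n := Int.emod_lt_of_pos _ hn
  have hb0 : 0 ≤ dn n v w := Int.emod_nonneg _ hn.ne'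
  have hbn : dn n v w < n := Int.emod_lt_of_pos _ hn
  have hp : dn n u v = (dn n u w - dn n v w) % n := by
    simp only [dn, ← Int.sub_emod]
    congr 1
    ring
  have hq : dn n v u = (dn n v w - dn n u w) % n := by
    simp only [dn, ← Int.sub_emod]
    congr 1
    ring
  simp only [z, t, hp, hq]
  generalize dn n u w = a at *
  generalize dn n v w = b at *
  rcases lt_trichotomy a b with h | h | h
  · have e1 : (a - b) % n = a - b + n := by
      rw [← Int.add_emod_right, Int.emod_eq_of_lt (by omega) (by omega)]
    have e2 : (b - a) % n = b - a := Int.emod_eq_of_lt (by omega) (by omega)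
    rw [e1, e2, abs_of_neg (by omega)]
    omega
  · subst h
    simp
  · have e1 : (b - a) % n = b - a + n := by
      rw [← Int.add_emod_right, Int.emod_eq_of_lt (by omega) (by omega)]
    have e2 : (a - b) % n = a - b := Int.emod_eq_of_lt (by omega) (by omega)
    rw [e1, e2, abs_of_pos (by omega)]
    omega

/-- The arithmetic core, with `t` the absolute difference of the two distances and
`s = n - a - b`, which has the parity of `n - t`. -/
lemma sq_add_sq_bound (n z t s : ℤ) (hz : 0 ≤ z) (hzt : z ≤ t) (hs : s % 2 = (n - t) % 2) :
    z ^ 2 - delta n * delta z ≤ t ^ 2 + s ^ 2 - delta n := by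
  have h0 : z ^ 2 ≤ t ^ 2 := by gcongr
  have hs0 := sq_nonneg s
  unfold delta
  by_cases hn : Odd n
  · by_cases hzo : Odd z
    · simp only [hn, hzo, if_true]
      linarith
    · simp only [hn, hzo, if_true, if_false]
      rw [Int.odd_iff] at hn hzo
      by_cases htz : t = z
      · -- `n - t` is odd, hence `s ≠ 0`
        have hs1 : 0 < s ^ 2 := by
          have : s ≠ 0 := by omega
          positivity
        omega
      · have hlt : z + 1 ≤ t := by omega
        nlinarith
  · simp only [hn, if_false]
    linarith

/-- The contribution of a single third point `w`; the theorem is the sum of two of these. -/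
lemma pair_bound (n : ℤ) (hn : 0 < n) (u v w : ℤ) :
    (min (dn n u v) (dn n v u)) ^ 2 - delta n * delta (min (dn n u v) (dn n v u)) ≤
      2 * (fn n u w + fn n v w - 2 * ((n / 2) * ((n - 1) / 2))) := by
  obtain ⟨h0, h1⟩ := abs_dn_sub n hn u v w
  have key := sq_add_sq_bound n _ _ (n - dn n u w - dn n v w) h0 h1
    (by rcases abs_cases (dn n u w - dn n v w) with h | h <;> omega)
  rw [sq_abs] at key
  have e1 := four_mul_fn n u w
  have e2 := four_mul_fn n v w
  have e3 := four_mul_halves n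
  linarith

theorem stmt_13 (n : ℤ) (hn : 3 ≤ n) (y1 y2 y3 y4 : ℤ) :
    fn n y1 y3 + fn n y1 y4 + fn n y2 y3 + fn n y2 y4 -
        4 * ((n / 2) * ((n - 1) / 2)) ≥
      (min (dn n y1 y2) (dn n y2 y1)) ^ 2 -
        delta n * delta (min (dn n y1 y2) (dn n y2 y1)) := by
  have h3 := pair_bound n (by omega) y1 y2 y3
  have h4 := pair_bound n (by omega) y1 y2 y4
  linarith
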